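/- There exists a polynomial p ∈ ℚ[X] of degree at most m and a natural number s₀ such that for every natural number s ≥ s₀, the transcendence degree over K of the subfield of L generated by K together with all elements δ₁^{e₁}⋯δ_m^{e_m}η_j with e₁+⋯+e_m ≤ s and 1 ≤ j ≤ n equals p(s). (Existence of the Kolchin dimension polynomial, with degree bounded by the number of derivations.) -/

import Mathlib

open Polynomial

/-- Iterated application of the derivations `δ` according to the multi-exponent `e`:
`x ↦ δ₁^[e 1] (δ₂^[e 2] (⋯ (δ_m^[e m] x)))`. -/
def thetaApply {L : Type*} {m : ℕ} (δ : Fin m → L → L) (e : Fin m → ℕ) : L → L :=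
  (List.ofFn (fun i => (δ i)^[e i])).foldr (· ∘ ·) id

/-- A subfield of `L` is a differential subfield if it is closed under each derivation. -/
def IsDiffSubfield {L : Type*} [Field L] {m : ℕ} (δ : Fin m → L → L) (K : Subfield L) : Prop :=
  ∀ i : Fin m, ∀ x ∈ K, δ i x ∈ K

/-- The transcendence degree (as a natural number) of an intermediate field over the base. -/
noncomputable def trdegNat {L : Type*} [Field L] (K : Subfield L) (E : IntermediateField K L) : ℕ :=
  (⨆ s : {s : Set E // AlgebraicIndependent K ((↑) : s → E)}, Cardinal.mk s.1).toNat

/-- `T_{η/K}(s)`: the transcendence degree over `K` of the subfield of `L` generated by `K`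
together with all `δ₁^(e 1) ⋯ δ_m^(e m) (η j)` with `e 1 + ⋯ + e m ≤ s`. -/
noncomputable def diffTrdeg {L : Type*} [Field L] {m n : ℕ} (δ : Fin m → L → L) (K : Subfield L)
    (η : Fin n → L) (s : ℕ) : ℕ :=
  trdegNat K (IntermediateField.adjoin K
    {x : L | ∃ e : Fin m → ℕ, (∑ i, e i) ≤ s ∧ ∃ j : Fin n, x = thetaApply δ e (η j)})

/-- `p` is a Kolchin polynomial of `η` over `K` if `p(s) = T_{η/K}(s)` for all large `s`. -/
def IsKolchinPoly {L : Type*} [Field L] {m n : ℕ} (δ : Fin m → L → L) (K : Subfield L)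
    (η : Fin n → L) (p : ℚ[X]) : Prop :=
  ∃ s₀ : ℕ, ∀ s : ℕ, s₀ ≤ s → p.eval (s : ℚ) = (diffTrdeg δ K η s : ℚ)

/-- `K⟨S⟩`: the smallest differential subfield of `L` containing `K` and `S`. -/
def diffAdjoin {L : Type*} [Field L] {m : ℕ} (δ : Fin m → L → L) (K : Subfield L)
    (S : Set L) : Subfield L :=
  sInf {F : Subfield L | IsDiffSubfield δ F ∧ K ≤ F ∧ S ⊆ F}

/-- `f` agrees for all large arguments with a rational polynomial of degree at most `d`. -/
def IsEventuallyPoly (d : ℕ) (f : ℕ → ℕ) : Prop :=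
  ∃ p : ℚ[X], p.natDegree ≤ d ∧ ∃ s₀ : ℕ, ∀ s : ℕ, s₀ ≤ s → p.eval (s : ℚ) = (f s : ℚ)

namespace IsEventuallyPoly

variable {d : ℕ} {f g h : ℕ → ℕ}

lemma sub (hf : IsEventuallyPoly d f) (hg : IsEventuallyPoly d g)
    (s₁ : ℕ) (hfgh : ∀ s, s₁ ≤ s → h s + g s = f s) : IsEventuallyPoly d h := by
  obtain ⟨p, hp, a, hpa⟩ := hf
  obtain ⟨q, hq, b, hqb⟩ := hg
  refine ⟨p - q, (natDegree_sub_le_of_le hp hq).trans (max_self d).le, a + b + s₁, fun s hs ↦ ?_⟩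
  rw [eval_sub, hpa s (by lia), hqb s (by lia), ← hfgh s (by lia)]
  push_cast
  ring

lemma shift (hf : IsEventuallyPoly d f) (k : ℕ) : IsEventuallyPoly d (fun s ↦ f (s - k)) := by
  obtain ⟨p, hp, a, hpa⟩ := hf
  refine ⟨p.comp (X - C (k : ℚ)), ?_, a + k, fun s hs ↦ ?_⟩
  · rwa [natDegree_comp, natDegree_X_sub_C, mul_one]
  · rw [eval_comp, ← hpa (s - k) (by lia), Nat.cast_sub (by lia)]
    simp

lemma sum {ι : Type*} (t : Finset ι) {f : ι → ℕ → ℕ} (hf : ∀ j ∈ t, IsEventuallyPoly d (f j)) :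
    IsEventuallyPoly d (fun s ↦ ∑ j ∈ t, f j s) := by
  classical
  choose! p hp a hpa using hf
  refine ⟨∑ j ∈ t, p j, natDegree_sum_le_of_forall_le t p hp, t.sup a, fun s hs ↦ ?_⟩
  rw [eval_finsetSum, Nat.cast_sum]
  exact Finset.sum_congr rfl fun j hj ↦ hpa j hj s ((Finset.le_sup hj).trans hs)

end IsEventuallyPoly

section Counting

variable {m : ℕ}

lemma finite_setOf_sum_le (s : ℕ) : {e : Fin m → ℕ | ∑ i, e i ≤ s}.Finite :=
  (Set.finite_Iic (fun _ : Fin m ↦ s)).subset fun _ he i ↦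
    (Finset.single_le_sum (fun _ _ ↦ Nat.zero_le _) (Finset.mem_univ i)).trans he

/-- Adding a slack coordinate turns `∑ e ≤ s` into an equation. -/
lemma ncard_setOf_sum_le (s : ℕ) : {e : Fin m → ℕ | ∑ i, e i ≤ s}.ncard = (s + m).choose m := by
  have slack : {e : Fin m → ℕ | ∑ i, e i ≤ s} ≃ {P : Fin (m + 1) → ℕ // ∑ i, P i = s} :=
    { toFun := fun e ↦ ⟨Fin.cons (s - ∑ i, e.1 i) e.1, by
        have : ∑ i, e.1 i ≤ s := e.2
        rw [Fin.sum_univ_succ]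
        simp only [Fin.cons_zero, Fin.cons_succ]
        lia⟩
      invFun := fun P ↦ ⟨Fin.tail P.1, by
        have := P.2
        rw [Fin.sum_univ_succ] at this
        change ∑ i : Fin m, P.1 i.succ ≤ s
        lia⟩
      left_inv := fun e ↦ by simp
      right_inv := fun P ↦ by
        have := P.2
        rw [Fin.sum_univ_succ] at this
        ext i
        refine Fin.cases ?_ (fun j ↦ ?_) i
        · change s - ∑ i : Fin m, P.1 i.succ = P.1 0
          lia
        · rfl }
  rw [← Nat.card_coe_set_eq, Nat.card_congr (slack.trans (Sym.equivNatSumOfFintype _ s).symm),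
    Nat.card_eq_fintype_card, Sym.card_sym_eq_choose, Fintype.card_fin, ← Nat.choose_symm_add]
  congr 1
  lia

/-- The number of lattice points of order at most `s` lying above none of the points in `F`. -/
lemma isEventuallyPoly_ncard_avoiding (F : List (Fin m → ℕ)) :
    IsEventuallyPoly m
      (fun s ↦ {e : Fin m → ℕ | ∑ i, e i ≤ s ∧ ∀ f ∈ F, ¬ f ≤ e}.ncard) := by
  induction hk : F.length generalizing F with
  | zero =>
    obtain rfl := List.length_eq_zero_iff.mp hk
    refine ⟨preHilbertPoly ℚ m 0, (natDegree_preHilbertPoly ℚ m 0).le, 0, fun s _ ↦ ?_⟩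
    rw [preHilbertPoly_eq_choose_sub_add ℚ m (Nat.zero_le s)]
    simp [ncard_setOf_sum_le]
  | succ k ih =>
    obtain ⟨a, F, rfl⟩ := List.exists_cons_of_length_eq_add_one hk
    have hF : F.length = k := by simpa using hk
    refine (ih F hF).sub ((ih (F.map (· - a)) (by simpa using hF)).shift (∑ i, a i))
      (∑ i, a i) fun s hs ↦ ?_
    have himage : {e : Fin m → ℕ | ∑ i, e i ≤ s ∧ ∀ f ∈ F, ¬ f ≤ e} ∩ {e | a ≤ e} =
        (· + a) '' {e : Fin m → ℕ | ∑ i, e i ≤ s - ∑ i, a i ∧ ∀ f ∈ F.map (· - a), ¬ f ≤ e} := by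
      ext e
      simp only [Set.mem_inter_iff, Set.mem_ofPred_eq, Set.mem_image, List.forall_mem_map,
        tsub_le_iff_right]
      constructor
      · rintro ⟨⟨he, hFe⟩, hae⟩
        refine ⟨e - a, ⟨?_, ?_⟩, tsub_add_cancel_of_le hae⟩
        · have : ∑ i, (e - a) i + ∑ i, a i = ∑ i, e i := by
            rw [← Finset.sum_add_distrib]
            exact Finset.sum_congr rfl fun i _ ↦ tsub_add_cancel_of_le (hae i)
          lia
        · rwa [tsub_add_cancel_of_le hae]
      · rintro ⟨e, ⟨he, hFe⟩, rfl⟩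
        refine ⟨⟨?_, hFe⟩, le_add_self⟩
        simp only [Pi.add_apply, Finset.sum_add_distrib]
        lia
    have hdiff : {e : Fin m → ℕ | ∑ i, e i ≤ s ∧ ∀ f ∈ a :: F, ¬ f ≤ e} =
        {e : Fin m → ℕ | ∑ i, e i ≤ s ∧ ∀ f ∈ F, ¬ f ≤ e} \ {e | a ≤ e} := by
      ext e
      simp only [List.forall_mem_cons, Set.mem_sdiff, Set.mem_ofPred_eq]
      tauto
    have hfin : {e : Fin m → ℕ | ∑ i, e i ≤ s ∧ ∀ f ∈ F, ¬ f ≤ e}.Finite :=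
      (finite_setOf_sum_le s).subset fun e he ↦ he.1
    rw [← Set.ncard_image_of_injective {e | ∑ i, e i ≤ s - ∑ i, a i ∧ _} (add_left_injective a),
      ← himage, hdiff, add_comm]
    exact Set.ncard_inter_add_ncard_sdiff_eq_ncard _ _ hfin

lemma IsUpperSet.isEventuallyPoly_ncard_compl {A : Set (Fin m → ℕ)} (hA : IsUpperSet A) :
    IsEventuallyPoly m (fun s ↦ {e : Fin m → ℕ | ∑ i, e i ≤ s ∧ e ∉ A}.ncard) := by
  have hmin : {a | Minimal (· ∈ A) a}.Finite :=
    WellQuasiOrderedLE.finite_of_isAntichain (setOfPred_minimal_antichain _)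
  obtain ⟨F, hF⟩ : ∃ F : List (Fin m → ℕ), ∀ e, e ∈ A ↔ ∃ f ∈ F, f ≤ e := by
    refine ⟨hmin.toFinset.toList, fun e ↦ ⟨?_, ?_⟩⟩
    · intro he
      obtain ⟨b, hbe, hb⟩ := exists_minimal_le_of_wellFoundedLT (· ∈ A) e he
      exact ⟨b, by simpa using hb, hbe⟩
    · rintro ⟨f, hf, hfe⟩
      exact hA hfe (by simpa using hf : Minimal (· ∈ A) f).prop
  simpa [hF] using isEventuallyPoly_ncard_avoiding F

lemma isUpperSet_of_add_single_mem {A : Set (Fin m → ℕ)}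
    (hA : ∀ e ∈ A, ∀ i, e + Pi.single i 1 ∈ A) : IsUpperSet A := by
  intro e e' hle he
  obtain ⟨c, rfl⟩ := exists_add_of_le hle
  clear hle
  have (c : Fin m → ℕ) (t : Finset (Fin m)) : e + ∑ i ∈ t, Pi.single i (c i) ∈ A := by
    induction t using Finset.induction_on with
    | empty => simpa
    | insert i t hi ih =>
      rw [Finset.sum_insert hi, add_comm (Pi.single i _), ← add_assoc]
      induction c i with
      | zero => simpa
      | succ k ihk =>
        rw [Pi.single_add, ← add_assoc]
        exact hA _ ihk i
  simpa [Finset.univ_sum_single] using this c Finset.univ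

end Counting

section Transcendence

variable {K L : Type*} [Field K] [Field L] [Algebra K L]

open AlgebraicIndependent in
lemma mem_matroid_closure_iff_isAlgebraic_adjoin {S : Set L} {a : L} :
    a ∈ (matroid K L).closure S ↔ IsAlgebraic (IntermediateField.adjoin K S) a := by
  rw [matroid_closure_eq, SetLike.mem_coe, Subalgebra.mem_algebraicClosure,
    IntermediateField.isAlgebraic_adjoin_iff]

lemma IsAlgebraic.adjoin_mono {S T : Set L} (h : S ⊆ T) {a : L}
    (ha : IsAlgebraic (IntermediateField.adjoin K S) a) :
    IsAlgebraic (IntermediateField.adjoin K T) a := by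
  rw [← mem_matroid_closure_iff_isAlgebraic_adjoin] at ha ⊢
  exact (AlgebraicIndependent.matroid K L).closure_subset_closure h ha

lemma IsAlgebraic.of_mem_adjoin {S : Set L} {a : L} (ha : a ∈ IntermediateField.adjoin K S) :
    IsAlgebraic (IntermediateField.adjoin K S) a :=
  isAlgebraic_algebraMap (⟨a, ha⟩ : IntermediateField.adjoin K S)

/-- Adjoining elements algebraic over `K(S)` to `K` gives a field algebraic over `K(S)`. -/
lemma IsAlgebraic.adjoin_trans {S T : Set L}
    (hT : ∀ t ∈ T, IsAlgebraic (IntermediateField.adjoin K S) t) {a : L}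
    (ha : IsAlgebraic (IntermediateField.adjoin K T) a) :
    IsAlgebraic (IntermediateField.adjoin K S) a := by
  rw [← mem_matroid_closure_iff_isAlgebraic_adjoin] at ha ⊢
  exact Matroid.closure_subset_closure_of_subset_closure
    (fun t ht ↦ mem_matroid_closure_iff_isAlgebraic_adjoin.mpr (hT t ht)) ha

lemma IntermediateField.isTranscendenceBasis_of_forall_isAlgebraic {ι : Type*}
    {E : IntermediateField K L} {y : ι → E} (hy : AlgebraicIndependent K fun i ↦ (y i : L))
    (halg : ∀ z : E, IsAlgebraic (adjoin K (Set.range fun i ↦ (y i : L))) (z : L)) :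
    IsTranscendenceBasis K y := by
  have hy' : AlgebraicIndependent K y := hy.of_comp E.val
  refine hy'.isTranscendenceBasis_iff_isAlgebraic.mpr ⟨fun z ↦ ?_⟩
  by_contra hz
  have hind := ((hy'.option_iff_transcendental z).mpr hz).map (f := E.val) E.val.injective.injOn
  refine (hy.option_iff_transcendental (z : L)).mp ?_ (isAlgebraic_adjoin_iff.mp (halg z))
  convert hind with o
  cases o <;> rfl

variable {ι κ : Type*} [LinearOrder κ] {key : ι → κ} {x : ι → L}

lemma algebraicIndependent_of_forall_transcendental (hkey : Function.Injective key)
    (hx : ∀ i, ¬ IsAlgebraic (IntermediateField.adjoin K (x '' {j | key j < key i})) (x i)) :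
    AlgebraicIndependent K x := by
  classical
  refine algebraicIndependent_of_finite_type fun t ht ↦ ?_
  obtain ⟨t, rfl⟩ := ht.exists_finset_coe
  change AlgebraicIndepOn K x t
  induction t using Finset.induction_on_max_value key with
  | empty =>
    rw [Finset.coe_empty]
    exact algebraicIndependent_empty_type_iff.mpr (FaithfulSMul.algebraMap_injective K L)
  | insert a t hat hle ih =>
    rw [Finset.coe_insert]
    refine (ih t.finite_toSet).insert fun halg ↦ hx a ?_
    refine (IntermediateField.isAlgebraic_adjoin_iff.mpr halg).adjoin_mono (Set.image_mono ?_)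
    exact fun j hj ↦ (hle j hj).lt_of_ne fun h ↦ hat (hkey h ▸ hj)

lemma isAlgebraic_adjoin_image_of_isLowerSet [WellFoundedLT κ] {D S : Set ι}
    (hD : ∀ i ∈ D, IsAlgebraic (IntermediateField.adjoin K (x '' {j | key j < key i})) (x i))
    (hS : ∀ i ∈ S, ∀ j, key j < key i → j ∈ S) {i : ι} (hi : i ∈ S) :
    IsAlgebraic (IntermediateField.adjoin K (x '' (S \ D))) (x i) := by
  induction h : key i using WellFoundedLT.induction generalizing i with
  | ind k ih =>
    subst h
    by_cases hiD : i ∈ D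
    · refine (hD i hiD).adjoin_trans ?_
      rintro _ ⟨j, hj, rfl⟩
      exact ih _ hj (hS i hi j hj) rfl
    · exact .of_mem_adjoin (IntermediateField.subset_adjoin _ _ ⟨i, ⟨hi, hiD⟩, rfl⟩)

/-- For a family indexed by a well-order, the members that are transcendental over their
predecessors form a transcendence basis of the field generated by any initial segment. -/
lemma trdeg_adjoin_image_of_isLowerSet [WellFoundedLT κ] (hkey : Function.Injective key)
    {S : Set ι} (hS : ∀ i ∈ S, ∀ j, key j < key i → j ∈ S) :
    Cardinal.toNat (Algebra.trdeg K (IntermediateField.adjoin K (x '' S))) =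
      (S \ {i | IsAlgebraic (IntermediateField.adjoin K (x '' {j | key j < key i})) (x i)}).ncard := by
  set D : Set ι := {i | IsAlgebraic (IntermediateField.adjoin K (x '' {j | key j < key i})) (x i)}
    with hD
  let y (i : ↥(S \ D)) : IntermediateField.adjoin K (x '' S) :=
    ⟨x i, IntermediateField.subset_adjoin _ _ ⟨i, i.2.1, rfl⟩⟩
  have hy : IsTranscendenceBasis K y := by
    refine IntermediateField.isTranscendenceBasis_of_forall_isAlgebraic ?_ fun z ↦ ?_
    · refine algebraicIndependent_of_forall_transcendental (key := fun i : ↥(S \ D) ↦ key i)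
        (hkey.comp Subtype.val_injective) fun i halg ↦ i.2.2 (halg.adjoin_mono ?_)
      rintro _ ⟨j, hj, rfl⟩
      exact ⟨j, hj, rfl⟩
    · have hrange : Set.range (fun i ↦ (y i : L)) = x '' (S \ D) := (Set.image_eq_range ..).symm
      rw [hrange]
      refine (IsAlgebraic.of_mem_adjoin z.2).adjoin_trans ?_
      rintro _ ⟨i, hi, rfl⟩
      exact isAlgebraic_adjoin_image_of_isLowerSet (fun i hi ↦ hi) hS hi
  have h := congrArg Cardinal.toNat hy.lift_cardinalMk_eq_trdeg
  rw [Cardinal.toNat_lift, Cardinal.toNat_lift] at h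
  rw [← h]
  rfl

end Transcendence

section Derivation
variable {L : Type*} [Field L]

/-- If `δ` maps `K` and a generating set of `F = K(S)` into `M`, then it maps `F` into `M`. -/
lemma Derivation.mem_of_mem_adjoin {K : Subfield L} (δ : Derivation ℤ L L)
    {S : Set L} {M : IntermediateField K L} (hK : ∀ a ∈ K, δ a ∈ M)
    (hS : ∀ a ∈ S, a ∈ M ∧ δ a ∈ M) {a : L} (ha : a ∈ IntermediateField.adjoin K S) : δ a ∈ M := by
  have hle : IntermediateField.adjoin K S ≤ M :=
    IntermediateField.adjoin_le_iff.mpr fun a ha ↦ (hS a ha).1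
  induction ha using IntermediateField.adjoin_induction with
  | mem a ha => exact (hS a ha).2
  | algebraMap a => exact hK a a.2
  | add a b _ _ ha hb => rw [map_add]; exact add_mem ha hb
  | inv a haS ha =>
    rw [δ.leibniz_inv]
    exact mul_mem (neg_mem (pow_mem (inv_mem (hle haS)) 2)) ha
  | mul a b haS hbS ha hb =>
    rw [δ.leibniz]
    exact add_mem (mul_mem (hle haS) hb) (mul_mem (hle hbS) ha)

/-- Differentiating the minimal polynomial of `v` expresses `δ v` rationally in terms of `v`, the
coefficients, and their derivatives. -/
lemma Derivation.mem_of_isAlgebraic [CharZero L] {K : Type*} [Field K] [Algebra K L]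
    (δ : Derivation ℤ L L) {F M : IntermediateField K L} (hFM : F ≤ M) (hδ : ∀ a ∈ F, δ a ∈ M)
    {v : L} (hvM : v ∈ M) (hv : IsAlgebraic F v) : δ v ∈ M := by
  have key (P : F[X]) : δ (aeval v P) - aeval v P.derivative * δ v ∈ M := by
    induction P using Polynomial.induction_on' with
    | add P Q hP hQ =>
      simp only [map_add]
      convert add_mem hP hQ using 1
      ring
    | monomial n c =>
      have : δ (aeval v (monomial n c)) - aeval v (monomial n c).derivative * δ v =
          v ^ n * δ c := by
        rw [derivative_monomial, aeval_monomial, aeval_monomial, δ.leibniz, δ.leibniz_pow]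
        simp
        ring
      rw [this]
      exact mul_mem (pow_mem hvM n) (hδ c c.2)
  have hmem (P : F[X]) : aeval v P ∈ M := by
    rw [aeval_eq_sum_range]
    exact sum_mem fun i _ ↦ mul_mem (hFM (P.coeff i).2) (pow_mem hvM i)
  have : CharZero F := (algebraMap F L).charZero
  have hsep : aeval v (minpoly F v).derivative ≠ 0 :=
    (minpoly.irreducible hv.isIntegral).separable.aeval_derivative_ne_zero (minpoly.aeval F v)
  have h := key (minpoly F v)
  rw [minpoly.aeval, map_zero, zero_sub, neg_mem_iff] at h
  simpa [hsep] using mul_mem (inv_mem (hmem (minpoly F v).derivative)) h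

end Derivation

section Theta
variable {L : Type*}

lemma thetaApply_succ {m : ℕ} (δ : Fin (m + 1) → L → L) (e : Fin (m + 1) → ℕ) (x : L) :
    thetaApply δ e x = (δ 0)^[e 0] (thetaApply (Fin.tail δ) (Fin.tail e) x) := by
  simp [thetaApply, List.ofFn_succ, Fin.tail_def]

lemma thetaApply_add_single {m : ℕ} {δ : Fin m → L → L}
    (hδ : ∀ i j, Function.Commute (δ i) (δ j)) (e : Fin m → ℕ) (i : Fin m) (x : L) :
    thetaApply δ (e + Pi.single i 1) x = δ i (thetaApply δ e x) := by
  induction m with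
  | zero => exact i.elim0
  | succ m ih =>
    rw [thetaApply_succ, thetaApply_succ]
    refine Fin.cases ?_ (fun i ↦ ?_) i
    · have htail : Fin.tail (e + Pi.single 0 1) = Fin.tail e := by
        ext j
        simp [Fin.tail]
      rw [htail, Pi.add_apply, Pi.single_eq_same, Function.iterate_succ_apply']
    · have htail : Fin.tail (e + Pi.single i.succ 1) = Fin.tail e + Pi.single i 1 := by
        ext j
        simp [Fin.tail, Pi.single_apply]
      rw [htail, ih (δ := Fin.tail δ) fun _ _ ↦ hδ _ _, Pi.add_apply,
        Pi.single_eq_of_ne (Fin.succ_ne_zero i).symm, add_zero]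
      exact ((hδ i.succ 0).iterate_right (e 0) _).symm

end Theta

section Ranking

variable {m n : ℕ}

/-- An orderly ranking of the derivatives: by order first, then lexicographically. -/
def rankingKey (t : (Fin m → ℕ) × Fin n) : ℕ ×ₗ (Lex (Fin m → ℕ) ×ₗ Fin n) :=
  toLex (∑ i, t.1 i, toLex (toLex t.1, t.2))

lemma rankingKey_injective : Function.Injective (rankingKey (m := m) (n := n)) := by
  rintro ⟨e, j⟩ ⟨e', j'⟩ h
  simp_all [rankingKey]

lemma sum_le_of_rankingKey_lt {t u : (Fin m → ℕ) × Fin n} (h : rankingKey t < rankingKey u) :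
    ∑ i, t.1 i ≤ ∑ i, u.1 i := by
  rcases Prod.Lex.toLex_lt_toLex.mp h with h | h
  exacts [h.le, h.1.le]

lemma rankingKey_add_lt_add {e e' : Fin m → ℕ} {j j' : Fin n}
    (h : rankingKey (e, j) < rankingKey (e', j')) (c : Fin m → ℕ) :
    rankingKey (e + c, j) < rankingKey (e' + c, j') := by
  simpa [rankingKey, Prod.Lex.toLex_lt_toLex, Finset.sum_add_distrib] using h

lemma rankingKey_lt_add_single (e : Fin m → ℕ) (i : Fin m) (j : Fin n) :
    rankingKey (e, j) < rankingKey (e + Pi.single i 1, j) := by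
  refine Prod.Lex.toLex_lt_toLex.mpr (.inl ?_)
  simp [Finset.sum_add_distrib]

end Ranking

section Kolchin

variable {L : Type*} [Field L] {m n : ℕ} {δ : Fin m → L → L} {K : Subfield L}

lemma diffTrdeg_eq_toNat_trdeg (δ : Fin m → L → L) (K : Subfield L) (η : Fin n → L) (s : ℕ) :
    diffTrdeg δ K η s = Cardinal.toNat (Algebra.trdeg K (IntermediateField.adjoin K
      ((fun t : (Fin m → ℕ) × Fin n ↦ thetaApply δ t.1 (η t.2)) '' {t | ∑ i, t.1 i ≤ s}))) := by
  have hset : {x : L | ∃ e : Fin m → ℕ, (∑ i, e i) ≤ s ∧ ∃ j : Fin n, x = thetaApply δ e (η j)} =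
      (fun t : (Fin m → ℕ) × Fin n ↦ thetaApply δ t.1 (η t.2)) '' {t | ∑ i, t.1 i ≤ s} := by
    ext x
    simp only [Set.mem_ofPred_eq, Set.mem_image, Prod.exists]
    grind
  rw [diffTrdeg, hset]
  rfl

/-- In characteristic zero, the derivatives that are algebraic over the lower-ranked ones are
closed under further differentiation. -/
lemma isAlgebraic_thetaApply_add_single [CharZero L]
    (hadd : ∀ i x y, δ i (x + y) = δ i x + δ i y)
    (hleib : ∀ i x y, δ i (x * y) = x * δ i y + δ i x * y)
    (hcomm : ∀ i j x, δ i (δ j x) = δ j (δ i x)) (hK : IsDiffSubfield δ K)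
    (η : Fin n → L) (e : Fin m → ℕ) (j : Fin n) (i : Fin m)
    (h : IsAlgebraic (IntermediateField.adjoin K
      ((fun t : (Fin m → ℕ) × Fin n ↦ thetaApply δ t.1 (η t.2)) ''
        {t | rankingKey t < rankingKey (e, j)})) (thetaApply δ e (η j))) :
    IsAlgebraic (IntermediateField.adjoin K
      ((fun t : (Fin m → ℕ) × Fin n ↦ thetaApply δ t.1 (η t.2)) ''
        {t | rankingKey t < rankingKey (e + Pi.single i 1, j)}))
      (thetaApply δ (e + Pi.single i 1) (η j)) := by
  let D : Derivation ℤ L L :=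
    .mk' (AddMonoidHom.mk' (δ i) (hadd i)).toIntLinearMap fun a b ↦
      (hleib i a b).trans (by rw [mul_comm (δ i a)]; rfl)
  have hlt := rankingKey_lt_add_single e i j
  have htheta (e : Fin m → ℕ) (j : Fin n) :
      D (thetaApply δ e (η j)) = thetaApply δ (e + Pi.single i 1) (η j) :=
    (thetaApply_add_single (fun i j ↦ hcomm i j) e i (η j)).symm
  apply IsAlgebraic.of_mem_adjoin
  rw [← htheta]
  refine D.mem_of_isAlgebraic
    (IntermediateField.adjoin.mono K _ _ (Set.image_mono fun t ht ↦ lt_trans ht hlt))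
    (fun a ha ↦ D.mem_of_mem_adjoin (fun a ha ↦ ?_) ?_ ha)
    (IntermediateField.subset_adjoin _ _ ⟨(e, j), hlt, rfl⟩) h
  · exact IntermediateField.algebraMap_mem _ (⟨D a, hK i a ha⟩ : K)
  · rintro _ ⟨⟨e', j'⟩, ht, rfl⟩
    refine ⟨IntermediateField.subset_adjoin _ _ ⟨(e', j'), lt_trans ht hlt, rfl⟩, ?_⟩
    rw [htheta]
    exact IntermediateField.subset_adjoin _ _
      ⟨(e' + Pi.single i 1, j'), rankingKey_add_lt_add ht _, rfl⟩

end Kolchin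

/-- Existence of the Kolchin dimension polynomial: there is a rational polynomial `p` of degree
at most `m` and an `s₀` such that for all `s ≥ s₀`, the transcendence degree over `K` of the
field generated by `K` and the derivatives of order `≤ s` of the tuple `η` equals `p(s)`. -/
theorem kolchin_dimension_polynomial_exists
    {L : Type*} [Field L] [CharZero L] {m : ℕ} (hm : 1 ≤ m)
    (δ : Fin m → L → L)
    (hadd : ∀ i : Fin m, ∀ x y : L, δ i (x + y) = δ i x + δ i y)
    (hleib : ∀ i : Fin m, ∀ x y : L, δ i (x * y) = x * δ i y + δ i x * y)
    (hcomm : ∀ i j : Fin m, ∀ x : L, δ i (δ j x) = δ j (δ i x))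
    (K : Subfield L) (hK : IsDiffSubfield δ K)
    {n : ℕ} (η : Fin n → L) :
    ∃ p : ℚ[X], p.natDegree ≤ m ∧
      ∃ s₀ : ℕ, ∀ s : ℕ, s₀ ≤ s → p.eval (s : ℚ) = (diffTrdeg δ K η s : ℚ) := by
  let x (t : (Fin m → ℕ) × Fin n) : L := thetaApply δ t.1 (η t.2)
  let A (j : Fin n) : Set (Fin m → ℕ) :=
    {e | IsAlgebraic (IntermediateField.adjoin K (x '' {t | rankingKey t < rankingKey (e, j)}))
      (x (e, j))}
  have hA (j : Fin n) : IsUpperSet (A j) := isUpperSet_of_add_single_mem fun e he i ↦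
    isAlgebraic_thetaApply_add_single hadd hleib hcomm hK η e j i he
  have hcount (s : ℕ) :
      diffTrdeg δ K η s = ∑ j, {e : Fin m → ℕ | ∑ i, e i ≤ s ∧ e ∉ A j}.ncard := by
    have hS : ∀ t ∈ {t : (Fin m → ℕ) × Fin n | ∑ i, t.1 i ≤ s},
        ∀ u, rankingKey u < rankingKey t → u ∈ {t : (Fin m → ℕ) × Fin n | ∑ i, t.1 i ≤ s} :=
      fun t ht u hu ↦ (sum_le_of_rankingKey_lt hu).trans ht
    rw [diffTrdeg_eq_toNat_trdeg, trdeg_adjoin_image_of_isLowerSet rankingKey_injective hS]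
    have hfin (j : Fin n) : Finite {e : Fin m → ℕ | ∑ i, e i ≤ s ∧ e ∉ A j} :=
      (finite_setOf_sum_le s).subset fun _ he ↦ he.1
    simp_rw [← Nat.card_coe_set_eq]
    rw [← Nat.card_sigma]
    exact Nat.card_congr
      { toFun := fun t ↦ ⟨t.1.2, t.1.1, t.2⟩
        invFun := fun u ↦ ⟨(u.2.1, u.1), u.2.2⟩
        left_inv := fun _ ↦ rfl
        right_inv := fun _ ↦ rfl }
  simp_rw [hcount]
  exact IsEventuallyPoly.sum Finset.univ fun j _ ↦ (hA j).isEventuallyPoly_ncard_compl
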